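/- Let V be a finite set, let V_1, …, V_r ⊆ V, and for each i let F_i : 2^V → ℝ be a nonnegative submodular set function that is V_i-restricted with F_i(∅) = F_i(V_i) = 0; let F = Σ_{i=1}^r F_i and M = max_{1 ≤ i ≤ r} |V_i|. Define c_{uv} = Σ_{i : u, v ∈ V_i} min { F_i(A) : A ⊆ V_i, u ∈ A, v ∉ A } for ordered pairs u ≠ v, and let c⁺(A) = Σ_{u ∈ A, v ∉ A} c_{uv} be the associated cut function. Then c⁺ is submodular with c⁺(∅) = c⁺(V) = 0, and the base polytopes satisfy (4/M²) · B(c⁺) ⊆ B(F) ⊆ B(c⁺). -/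

import Mathlib

/-!
Both inclusions follow from the pointwise bounds `F A ≤ c⁺ A ≤ (M² / 4) F A`, since all the
functions involved vanish on the whole ground set. The bounds are proved for each `F_i` separately
and then summed, using that `c⁺ A` is the sum over `i` of the quantities
`∑ u ∈ A ∩ V_i, ∑ v ∈ V_i \ A, m_i u v` (`cutVal_eq_sum`).

* Lower bound (`le_sum_min`): if `G u v` is a minimizer for the pair `(u, v)`, then within `V_i`
  the set `A` equals `⋃ u ∈ A, ⋂ v ∉ A, G u v`. A nonnegative submodular function is subadditive
  both under unions and under intersections.
* Upper bound (`sum_min_le`): `A` itself separates each of the `|A ∩ V_i| |V_i \ A| ≤ |V_i|² / 4`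
  pairs, so each minimum is at most `F_i A`.

Submodularity of `c⁺` only uses that the off-diagonal capacities are nonnegative.
-/

/-- A set function `F` on the subsets of a finite ground set is *submodular* if
`F (A ∪ B) + F (A ∩ B) ≤ F A + F B` for all `A, B`. -/
def Submodular {V : Type*} [DecidableEq V] (F : Finset V → ℝ) : Prop :=
  ∀ A B : Finset V, F (A ∪ B) + F (A ∩ B) ≤ F A + F B

/-- The cut value of a set `S` for capacities `c`: `c⁺(S) = Σ_{u ∈ S, v ∉ S} c u v`. -/
def cutVal {V : Type*} [Fintype V] [DecidableEq V] (c : V → V → ℝ) (S : Finset V) : ℝ :=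
  ∑ u ∈ S, ∑ v ∈ Sᶜ, c u v

/-- The submodular base polytope of a set function `F` with `F ∅ = 0`:
`B(F) = { w : Σ_{i ∈ A} w i ≤ F A for all A, and Σ_{i ∈ V} w i = F V }`. -/
def basePolytope {V : Type*} [Fintype V] (F : Finset V → ℝ) : Set (V → ℝ) :=
  {w | (∀ A : Finset V, ∑ i ∈ A, w i ≤ F A) ∧ ∑ i, w i = F Finset.univ}

section Helpers

variable {V : Type*} [DecidableEq V] [Fintype V]

lemma cutVal_eq_sum_ite (c : V → V → ℝ) (S : Finset V) :
    cutVal c S = ∑ u, ∑ v, if u ∈ S ∧ v ∉ S then c u v else 0 := by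
  unfold cutVal
  rw [← Finset.sum_filter_add_sum_filter_not Finset.univ (fun u => u ∈ S)]
  rw [Finset.sum_eq_zero (s := Finset.univ.filter fun u => ¬ u ∈ S), add_zero]
  · rw [Finset.filter_univ_mem]
    refine Finset.sum_congr rfl fun u hu => ?_
    simp only [hu, true_and]
    rw [← Finset.sum_filter]
    exact Finset.sum_congr (by ext; simp) fun _ _ => rfl
  · intro u hu
    have hu' : u ∉ S := by simpa using hu
    simp [hu']

lemma submodular_cutVal (c : V → V → ℝ) (hc : ∀ u v, u ≠ v → 0 ≤ c u v) :
    Submodular (cutVal c) := by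
  intro A B
  simp only [cutVal_eq_sum_ite, ← Finset.sum_add_distrib]
  refine Finset.sum_le_sum fun u _ => Finset.sum_le_sum fun v _ => ?_
  by_cases huv : u = v
  · subst huv
    by_cases h1 : u ∈ A <;> by_cases h2 : u ∈ B <;> simp [h1, h2]
  · have := hc u v huv
    by_cases h1 : u ∈ A <;> by_cases h2 : u ∈ B <;> by_cases h3 : v ∈ A <;>
      by_cases h4 : v ∈ B <;> simp [h1, h2, h3, h4, this]

lemma apply_sup_le {V : Type*} [DecidableEq V] {F : Finset V → ℝ} (hsub : Submodular F) (hnonneg : ∀ A, 0 ≤ F A)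
    (h0 : F ∅ = 0) {ι : Type*} (s : Finset ι) (f : ι → Finset V) :
    F (s.sup f) ≤ ∑ x ∈ s, F (f x) := by
  classical
  induction s using Finset.induction_on with
  | empty => simp [h0]
  | insert a s ha ih =>
    rw [Finset.sup_insert, Finset.sum_insert ha]
    have h1 := hsub (f a) (s.sup f)
    have h2 := hnonneg (f a ∩ s.sup f)
    rw [Finset.sup_eq_union]
    linarith

lemma apply_inf_le {F : Finset V → ℝ} (hsub : Submodular F) (hnonneg : ∀ A, 0 ≤ F A)
    (h1 : F Finset.univ = 0) {ι : Type*} (s : Finset ι) (f : ι → Finset V) :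
    F (s.inf f) ≤ ∑ x ∈ s, F (f x) := by
  classical
  induction s using Finset.induction_on with
  | empty => simp [h1]
  | insert a s ha ih =>
    rw [Finset.inf_insert, Finset.sum_insert ha]
    have h1 := hsub (f a) (s.inf f)
    have h2 := hnonneg (f a ∪ s.inf f)
    rw [Finset.inf_eq_inter]
    linarith

/-- If every value `m u v` with `u ∈ A ∩ W`, `v ∈ W \ A` is attained by a set separating `u` from
`v`, then `F A` is at most the sum of these values. -/
lemma le_sum_min {F : Finset V → ℝ} (hsub : Submodular F) (hnonneg : ∀ A, 0 ≤ F A)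
    {W : Finset V} (hres : ∀ A, F A = F (A ∩ W)) (h0 : F ∅ = 0) (hW : F W = 0)
    {m : V → V → ℝ} (A : Finset V)
    (hm : ∀ u v, u ∈ A ∩ W → v ∈ W \ A → ∃ G : Finset V, u ∈ G ∧ v ∉ G ∧ F G = m u v) :
    F A ≤ ∑ u ∈ A ∩ W, ∑ v ∈ W \ A, m u v := by
  choose! G hG using hm
  have huniv : F Finset.univ = 0 := by rw [hres, Finset.univ_inter, hW]
  have key : A ∩ W = ((A ∩ W).sup fun u => (W \ A).inf fun v => G u v) ∩ W := by
    ext x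
    simp only [Finset.mem_inter, Finset.mem_sup, Finset.mem_inf]
    constructor
    · rintro ⟨hxA, hxW⟩
      exact ⟨⟨x, ⟨hxA, hxW⟩, fun v hv => (hG x v (by simp [hxA, hxW]) hv).1⟩, hxW⟩
    · rintro ⟨⟨u, ⟨huA, huW⟩, hu⟩, hxW⟩
      refine ⟨?_, hxW⟩
      by_contra hxA
      have hx : x ∈ W \ A := by simp [hxA, hxW]
      exact (hG u x (by simp [huA, huW]) hx).2.1 (hu x hx)
  calc F A = F ((A ∩ W).sup fun u => (W \ A).inf fun v => G u v) := by
        exact (hres A).trans ((congrArg F key).trans (hres _).symm)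
    _ ≤ ∑ u ∈ A ∩ W, F ((W \ A).inf fun v => G u v) := apply_sup_le hsub hnonneg h0 _ _
    _ ≤ ∑ u ∈ A ∩ W, ∑ v ∈ W \ A, F (G u v) :=
        Finset.sum_le_sum fun u _ => apply_inf_le hsub hnonneg huniv _ _
    _ = ∑ u ∈ A ∩ W, ∑ v ∈ W \ A, m u v :=
        Finset.sum_congr rfl fun u hu => Finset.sum_congr rfl fun v hv => (hG u v hu hv).2.2

lemma sum_min_le {V : Type*} [DecidableEq V] (W A : Finset V) {m : V → V → ℝ} {a : ℝ} (ha : 0 ≤ a)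
    (hm : ∀ u v, u ∈ A ∩ W → v ∈ W \ A → m u v ≤ a) :
    ∑ u ∈ A ∩ W, ∑ v ∈ W \ A, m u v ≤ (W.card : ℝ) ^ 2 / 4 * a := by
  have hcard : ((A ∩ W).card : ℝ) + (W \ A).card = W.card := by
    have := Finset.card_inter_add_card_sdiff W A
    rw [Finset.inter_comm] at this
    exact_mod_cast this
  calc ∑ u ∈ A ∩ W, ∑ v ∈ W \ A, m u v ≤ ∑ u ∈ A ∩ W, ∑ v ∈ W \ A, a :=
        Finset.sum_le_sum fun u hu => Finset.sum_le_sum fun v hv => hm u v hu hv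
    _ = ((A ∩ W).card * (W \ A).card : ℝ) * a := by simp [mul_assoc]
    _ ≤ (W.card : ℝ) ^ 2 / 4 * a := by
        refine mul_le_mul_of_nonneg_right ?_ ha
        rw [← hcard]
        nlinarith [sq_nonneg (((A ∩ W).card : ℝ) - (W \ A).card)]

lemma cutVal_eq_sum {r : ℕ} (Vs : Fin r → Finset V) (m : Fin r → V → V → ℝ) (c : V → V → ℝ)
    (hc : ∀ u v : V, u ≠ v →
      c u v = ∑ i : Fin r, if u ∈ Vs i ∧ v ∈ Vs i then m i u v else 0) (A : Finset V) :
    cutVal c A = ∑ i, ∑ u ∈ A ∩ Vs i, ∑ v ∈ Vs i \ A, m i u v := by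
  have h1 : cutVal c A =
      ∑ u ∈ A, ∑ v ∈ Aᶜ, ∑ i : Fin r, if u ∈ Vs i ∧ v ∈ Vs i then m i u v else 0 := by
    refine Finset.sum_congr rfl fun u hu => Finset.sum_congr rfl fun v hv => hc u v ?_
    rintro rfl
    exact Finset.mem_compl.1 hv hu
  rw [h1, Finset.sum_congr rfl fun u _ => Finset.sum_comm, Finset.sum_comm]
  refine Finset.sum_congr rfl fun i _ => ?_
  rw [← Finset.filter_mem_eq_inter, Finset.sum_filter]
  refine Finset.sum_congr rfl fun u _ => ?_
  by_cases hu : u ∈ Vs i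
  · simp only [hu, true_and, if_true]
    rw [← Finset.sum_filter]
    exact Finset.sum_congr (by ext; simp [and_comm]) fun _ _ => rfl
  · simp [hu]

end Helpers

/-- Let `F_1, …, F_r` be nonnegative submodular functions, each `V_i`-restricted with
`F_i ∅ = F_i V_i = 0`, and let `F = Σ_i F_i`, `M = max_i |V_i|`. With capacities
`c u v = Σ_{i : u, v ∈ V_i} min { F_i A : A ⊆ V_i, u ∈ A, v ∉ A }` for `u ≠ v`, the cut
function `c⁺` is submodular with `c⁺ ∅ = c⁺ V = 0`, and
`(4/M²) B(c⁺) ⊆ B(F) ⊆ B(c⁺)`. -/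
theorem stmt4 {V : Type*} [DecidableEq V] [Fintype V]
    (r : ℕ) (Vs : Fin r → Finset V)
    (F : Fin r → Finset V → ℝ)
    (hsub : ∀ i, Submodular (F i))
    (hnonneg : ∀ i (A : Finset V), 0 ≤ F i A)
    (hres : ∀ i (A : Finset V), F i A = F i (A ∩ Vs i))
    (h0 : ∀ i, F i ∅ = 0) (hVi : ∀ i, F i (Vs i) = 0)
    (m : Fin r → V → V → ℝ)
    (hm : ∀ (i : Fin r) (u v : V), u ≠ v → u ∈ Vs i → v ∈ Vs i →
      IsLeast {x : ℝ | ∃ A : Finset V, A ⊆ Vs i ∧ u ∈ A ∧ v ∉ A ∧ F i A = x} (m i u v))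
    (c : V → V → ℝ)
    (hc : ∀ u v : V, u ≠ v →
      c u v = ∑ i : Fin r, if u ∈ Vs i ∧ v ∈ Vs i then m i u v else 0)
    (M : ℕ) (hM : M = Finset.univ.sup fun i => (Vs i).card) :
    Submodular (cutVal c) ∧
    cutVal c ∅ = 0 ∧ cutVal c Finset.univ = 0 ∧
    (fun w : V → ℝ => (4 / (M : ℝ) ^ 2) • w) '' basePolytope (cutVal c) ⊆
      basePolytope (fun A : Finset V => ∑ i, F i A) ∧
    basePolytope (fun A : Finset V => ∑ i, F i A) ⊆ basePolytope (cutVal c) := by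
  have hm0 : ∀ i u v, u ≠ v → u ∈ Vs i → v ∈ Vs i → 0 ≤ m i u v := by
    intro i u v huv hu hv
    obtain ⟨A, -, -, -, hA⟩ := (hm i u v huv hu hv).1
    exact hA ▸ hnonneg i A
  have hc0 : ∀ u v, u ≠ v → 0 ≤ c u v := by
    intro u v huv
    rw [hc u v huv]
    refine Finset.sum_nonneg fun i _ => ?_
    split_ifs with h
    · exact hm0 i u v huv h.1 h.2
    · exact le_rfl
  have hcutE : cutVal c ∅ = 0 := by simp [cutVal]
  have hcutU : cutVal c Finset.univ = 0 := by simp [cutVal]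
  have hFU : ∑ i, F i Finset.univ = 0 :=
    Finset.sum_eq_zero fun i _ => by rw [hres, Finset.univ_inter, hVi]
  have hsep : ∀ i (A : Finset V) u v, u ∈ A ∩ Vs i → v ∈ Vs i \ A →
      IsLeast {x : ℝ | ∃ A : Finset V, A ⊆ Vs i ∧ u ∈ A ∧ v ∉ A ∧ F i A = x} (m i u v) := by
    intro i A u v hu hv
    rw [Finset.mem_inter] at hu
    rw [Finset.mem_sdiff] at hv
    exact hm i u v (fun h => hv.2 (h ▸ hu.1)) hu.2 hv.1
  have hlow : ∀ A, ∑ i, F i A ≤ cutVal c A := by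
    intro A
    rw [cutVal_eq_sum Vs m c hc]
    refine Finset.sum_le_sum fun i _ =>
      le_sum_min (hsub i) (hnonneg i) (hres i) (h0 i) (hVi i) A fun u v hu hv => ?_
    obtain ⟨G, -, h1, h2, h3⟩ := (hsep i A u v hu hv).1
    exact ⟨G, h1, h2, h3⟩
  have hupp : ∀ A, cutVal c A ≤ (M : ℝ) ^ 2 / 4 * ∑ i, F i A := by
    intro A
    rw [cutVal_eq_sum Vs m c hc, Finset.mul_sum]
    refine Finset.sum_le_sum fun i _ => ?_
    have hcard : ((Vs i).card : ℝ) ≤ M := by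
      rw [hM]
      exact_mod_cast Finset.le_sup (f := fun i => (Vs i).card) (Finset.mem_univ i)
    have hFA := hnonneg i A
    refine (sum_min_le (Vs i) A hFA fun u v hu hv => ?_).trans ?_
    swap
    · have hsq := pow_le_pow_left₀ (Nat.cast_nonneg _) hcard 2
      exact mul_le_mul_of_nonneg_right (by linarith) hFA
    refine (hsep i A u v hu hv).2 ⟨A ∩ Vs i, Finset.inter_subset_right, hu, ?_, (hres i A).symm⟩
    exact fun h => (Finset.mem_sdiff.1 hv).2 (Finset.mem_inter.1 h).1
  refine ⟨submodular_cutVal c hc0, hcutE, hcutU, ?_, ?_⟩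
  · rintro _ ⟨w, ⟨hw, hwU⟩, rfl⟩
    refine ⟨fun A => ?_, ?_⟩
    · simp only [Pi.smul_apply, smul_eq_mul, ← Finset.mul_sum]
      have hF : 0 ≤ ∑ i, F i A := Finset.sum_nonneg fun i _ => hnonneg i A
      -- For `M = 0` the factor `4 / M ^ 2` is `0` in Lean, and nonnegativity of `F` suffices.
      rcases Nat.eq_zero_or_pos M with h | h
      · simpa [h] using hF
      · have hMpos : (0 : ℝ) < M := by exact_mod_cast h
        calc 4 / (M : ℝ) ^ 2 * ∑ i ∈ A, w i
            ≤ 4 / (M : ℝ) ^ 2 * ((M : ℝ) ^ 2 / 4 * ∑ i, F i A) := by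
              gcongr
              exact (hw A).trans (hupp A)
          _ = ∑ i, F i A := by field_simp
    · simp only [Pi.smul_apply, smul_eq_mul, ← Finset.mul_sum]
      rw [hwU, hcutU, hFU, mul_zero]
  · rintro w ⟨hw, hwU⟩
    exact ⟨fun A => (hw A).trans (hlow A), (hwU.trans hFU).trans hcutU.symm⟩
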